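/- There exist absolute constants C > 0 and k ≥ 0 with the following property. Let t > 0, x ∈ ℝ², C_f > 0, and let K_g : [0,t] × ℝ² → [0,∞) be measurable such that for every a ∈ [0,t] the flux of K_g on the backward light cone with tip (a,x) is at most C_f. Then for every ε ∈ (0,1]: ∫₀ᵗ ∫_{(1−ε)(t−s) < |y−x| ≤ t−s} K_g(s,y)^{5/3} / ( (t−s) (1 − |ξ|²)^{1/2} ) dy ds ≤ C C_f^{5/6} (1+t)^k ε^{1/2}, where ξ = (y−x)/(t−s). -/

import Mathlib

open MeasureTheory Set
open scoped NNReal ENNReal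

/-- The unit vector `(cos θ, sin θ) ∈ ℝ²`. -/
noncomputable def unitVec (θ : ℝ) : EuclideanSpace ℝ (Fin 2) :=
  (EuclideanSpace.equiv (Fin 2) ℝ).symm ![Real.cos θ, Real.sin θ]

/-- The flux `∫₀^a ∫₀^{2π} (a−s) K_g(s, x + (a−s)ω(θ))² dθ ds` of `K_g` on the backward
light cone with tip `(a, x)`. -/
noncomputable def coneFlux (Kg : ℝ → EuclideanSpace ℝ (Fin 2) → ℝ) (a : ℝ)
    (x : EuclideanSpace ℝ (Fin 2)) : ℝ≥0∞ :=
  ∫⁻ s in Ioc (0 : ℝ) a, ∫⁻ θ in Ioc (0 : ℝ) (2 * Real.pi),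
    ENNReal.ofReal ((a - s) * Kg s (x + (a - s) • unitVec θ) ^ 2)

/-!
Parametrize the radius as `|y - x| = a - s`. The shell then becomes the set of pairs `(s, a)` with
`0 < s < a < t` and `t - a < ε (t - s)`, and freezing `a` leaves an integral over the backward cone
with tip `(a, x)`. Since `(t - s)² - (a - s)² ≥ (t - s) (t - a)`, for each exponent `p < 2` the
integrand is at most `(t - a)^(-1/2) ((a - s) K_g²)^(p/2) (t - s)^((1 - p)/2)`, and Hölder's
inequality on the cone costs the flux to the power `p / 2` times the tail of
`(t - s)^((1 - p)/(2 - p))` over `t - s > (t - a) / ε`, to the power `1 - p / 2`. The tail converges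
for `p > 3/2` and gives `ε^(p - 3/2) (t - a)^(1 - p)`, whose integral over `0 < t - a < ε t` is a
multiple of `ε^(1/2) t^(2 - p)`; it converges for `p < 2`.
-/

section PowerIntegrals

theorem lintegral_Ioi_ofReal_rpow {σ c : ℝ} (hσ : σ < -1) (hc : 0 < c) :
    ∫⁻ u in Ioi c, ENNReal.ofReal (u ^ σ) = ENNReal.ofReal (-c ^ (σ + 1) / (σ + 1)) := by
  rw [← ofReal_integral_eq_lintegral_ofReal (integrableOn_Ioi_rpow_of_lt hσ hc),
    integral_Ioi_rpow_of_lt hσ hc]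
  filter_upwards [ae_restrict_mem measurableSet_Ioi] with u hu
  exact Real.rpow_nonneg (hc.trans hu).le σ

theorem lintegral_Ioo_ofReal_rpow {σ c : ℝ} (hσ : -1 < σ) (hc : 0 ≤ c) :
    ∫⁻ u in Ioo 0 c, ENNReal.ofReal (u ^ σ) = ENNReal.ofReal (c ^ (σ + 1) / (σ + 1)) := by
  have hint : IntegrableOn (fun u : ℝ => u ^ σ) (Ioc 0 c) :=
    (intervalIntegrable_iff_integrableOn_Ioc_of_le hc).1
      (intervalIntegral.intervalIntegrable_rpow' hσ)
  rw [restrict_Ioo_eq_restrict_Ioc, ← ofReal_integral_eq_lintegral_ofReal hint,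
    ← intervalIntegral.integral_of_le hc, integral_rpow (Or.inl hσ),
    Real.zero_rpow (by linarith), sub_zero]
  filter_upwards [ae_restrict_mem measurableSet_Ioc] with u hu
  exact Real.rpow_nonneg hu.1.le σ

end PowerIntegrals

section Lebesgue

variable {α β : Type*} [MeasurableSpace α] [MeasurableSpace β]
  {μ : Measure α} {ν : Measure β} [SFinite ν]

theorem lintegral_setLIntegral_section_swap [SFinite μ] {R : Set (α × β)} (hR : MeasurableSet R)
    {f : α → β → ℝ≥0∞} (hf : Measurable (Function.uncurry f)) :
    ∫⁻ x, ∫⁻ y in {y | (x, y) ∈ R}, f x y ∂ν ∂μ =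
      ∫⁻ y, ∫⁻ x in {x | (x, y) ∈ R}, f x y ∂μ ∂ν := by
  have hleft (x : α) : ∫⁻ y in {y | (x, y) ∈ R}, f x y ∂ν =
      ∫⁻ y, R.indicator (Function.uncurry f) (x, y) ∂ν :=
    (lintegral_indicator (measurable_prodMk_left hR) _).symm
  have hright (y : β) : ∫⁻ x in {x | (x, y) ∈ R}, f x y ∂μ =
      ∫⁻ x, R.indicator (Function.uncurry f) (x, y) ∂μ :=
    (lintegral_indicator (measurable_prodMk_right hR) _).symm
  simp only [hleft, hright]
  exact lintegral_lintegral_swap (hf.indicator hR).aemeasurable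

theorem lintegral_lintegral_rpow_mul_rpow_le {f : α → β → ℝ≥0∞}
    (hf : Measurable (Function.uncurry f)) {w : α → ℝ≥0∞} (hw : Measurable w)
    {q : ℝ} (hq₀ : 0 ≤ q) (hq₁ : q ≤ 1) :
    ∫⁻ x, ∫⁻ y, f x y ^ q * w x ^ (1 - q) ∂ν ∂μ ≤
      (∫⁻ x, ∫⁻ y, f x y ∂ν ∂μ) ^ q * (ν univ * ∫⁻ x, w x ∂μ) ^ (1 - q) := by
  have hfst : Measurable fun z : α × β => w z.1 := hw.comp measurable_fst
  have hweight : ∫⁻ z, w z.1 ∂μ.prod ν = ν univ * ∫⁻ x, w x ∂μ := by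
    rw [lintegral_prod _ hfst.aemeasurable]
    simp only [lintegral_const]
    rw [lintegral_mul_const _ hw, mul_comm]
  have holder := ENNReal.lintegral_mul_norm_pow_le (μ := μ.prod ν) hf.aemeasurable
    hfst.aemeasurable hq₀ (sub_nonneg.2 hq₁) (add_sub_cancel q 1)
  have hprod : Measurable fun z : α × β => Function.uncurry f z ^ q * w z.1 ^ (1 - q) := by
    fun_prop
  rwa [lintegral_prod _ hprod.aemeasurable, lintegral_prod _ hf.aemeasurable, hweight] at holder

theorem setLIntegral_Ioc_add_eq_of_periodic {f : ℝ → ℝ≥0∞} {T : ℝ} (hf : Function.Periodic f T)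
    (hT : 0 < T) (a b : ℝ) : ∫⁻ u in Ioc a (a + T), f u = ∫⁻ u in Ioc b (b + T), f u := by
  refine (isAddFundamentalDomain_Ioc hT a).setLIntegral_eq (isAddFundamentalDomain_Ioc hT b) f ?_
  rintro ⟨_, n, rfl⟩ u
  simpa only [AddSubgroup.vadd_def, vadd_eq_add, add_comm] using hf.zsmul n u

end Lebesgue

section Polar

theorem continuous_unitVec : Continuous unitVec := by
  refine (EuclideanSpace.equiv (Fin 2) ℝ).symm.continuous.comp (continuous_pi fun i => ?_)
  fin_cases i
  · exact Real.continuous_cos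
  · exact Real.continuous_sin

@[fun_prop]
theorem measurable_unitVec : Measurable unitVec := continuous_unitVec.measurable

theorem norm_unitVec (θ : ℝ) : ‖unitVec θ‖ = 1 := by
  simp [EuclideanSpace.norm_eq, unitVec]

theorem periodic_unitVec : Function.Periodic unitVec (2 * Real.pi) := fun θ => by
  simp only [unitVec, Real.cos_add_two_pi, Real.sin_add_two_pi]

theorem dist_add_smul_unitVec {r : ℝ} (hr : 0 ≤ r) (x : EuclideanSpace ℝ (Fin 2)) (θ : ℝ) :
    dist (x + r • unitVec θ) x = r := by
  rw [dist_self_add_left, norm_smul, norm_unitVec, mul_one, Real.norm_of_nonneg hr]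

theorem lintegral_eq_lintegral_prod_toLp (F : EuclideanSpace ℝ (Fin 2) → ℝ≥0∞) :
    ∫⁻ y, F y = ∫⁻ z : ℝ × ℝ, F (WithLp.toLp 2 ![z.1, z.2]) :=
  (((EuclideanSpace.volume_preserving_symm_measurableEquiv_toLp (Fin 2)).symm _).comp
    ((volume_preserving_finTwoArrow ℝ).symm _)).lintegral_comp_emb
      ((MeasurableEquiv.finTwoArrow.symm.trans
        (MeasurableEquiv.toLp 2 (Fin 2 → ℝ))).measurableEmbedding) F |>.symm

variable {F : EuclideanSpace ℝ (Fin 2) → ℝ≥0∞}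

theorem lintegral_eq_lintegral_polar (hF : Measurable F) (x : EuclideanSpace ℝ (Fin 2)) :
    ∫⁻ y, F y = ∫⁻ r in Ioi (0 : ℝ), ∫⁻ θ in Ioc (0 : ℝ) (2 * Real.pi),
      ENNReal.ofReal r * F (x + r • unitVec θ) := by
  have hpolar (q : ℝ × ℝ) :
      WithLp.toLp 2 ![(polarCoord.symm q).1, (polarCoord.symm q).2] = q.1 • unitVec q.2 := by
    ext i
    fin_cases i <;> simp [unitVec, polarCoord]
  rw [← lintegral_add_left_eq_self F x, lintegral_eq_lintegral_prod_toLp,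
    ← lintegral_comp_polarCoord_symm, polarCoord_target, Measure.volume_eq_prod]
  simp only [hpolar, smul_eq_mul]
  rw [setLIntegral_prod _ (by fun_prop)]
  refine lintegral_congr fun r => ?_
  have hper : Function.Periodic (fun θ => ENNReal.ofReal r * F (x + r • unitVec θ))
      (2 * Real.pi) := fun θ => by simp only [periodic_unitVec θ]
  have hshift := setLIntegral_Ioc_add_eq_of_periodic hper Real.two_pi_pos (-Real.pi) 0
  rwa [show -Real.pi + 2 * Real.pi = Real.pi by ring, zero_add,
    ← restrict_Ioo_eq_restrict_Ioc] at hshift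

theorem setLIntegral_dist_mem_eq_lintegral_polar (hF : Measurable F)
    (x : EuclideanSpace ℝ (Fin 2)) {S : Set ℝ} (hS : MeasurableSet S) :
    ∫⁻ y in {y | dist y x ∈ S}, F y = ∫⁻ r in Ioi 0 ∩ S, ∫⁻ θ in Ioc (0 : ℝ) (2 * Real.pi),
      ENNReal.ofReal r * F (x + r • unitVec θ) := by
  have hshell : MeasurableSet {y | dist y x ∈ S} := measurable_id.dist measurable_const hS
  rw [← lintegral_indicator hshell, lintegral_eq_lintegral_polar (hF.indicator hshell) x,
    inter_comm, ← Measure.restrict_restrict hS, ← lintegral_indicator hS]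
  refine setLIntegral_congr_fun measurableSet_Ioi fun r hr => ?_
  have hdist := dist_add_smul_unitVec (mem_Ioi.1 hr).le x
  by_cases h : r ∈ S <;> simp [indicator, hdist, h]

end Polar

section LightConeWeight

variable {r τ K p : ℝ}

theorem div_le_one_sub_div_sq (hr : 0 ≤ r) (h : r ≤ τ) (hτ : 0 < τ) :
    (τ - r) / τ ≤ 1 - (r / τ) ^ 2 := by
  have hratio : r / τ ≤ 1 := (div_le_one hτ).2 h
  rw [sub_div, div_self hτ.ne']
  nlinarith [div_nonneg hr hτ.le]

theorem mul_sq_rpow_half (hr : 0 ≤ r) (hK : 0 ≤ K) (p : ℝ) :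
    (r * K ^ 2) ^ (p / 2) = r ^ (p / 2) * K ^ p := by
  rw [Real.mul_rpow hr (sq_nonneg K), ← Real.rpow_natCast_mul hK]
  congr 2
  push_cast
  ring

theorem mul_rpow_div_le (hr : 0 < r) (h : r < τ) (hK : 0 ≤ K) (hp : p ≤ 2) :
    r * (K ^ p / (τ * (1 - (r / τ) ^ 2) ^ ((1 : ℝ) / 2))) ≤
      (τ - r) ^ (-(1 / 2) : ℝ) * ((r * K ^ 2) ^ (p / 2) * τ ^ ((1 - p) / 2)) := by
  have hτ : 0 < τ := hr.trans h
  have hd : 0 < τ - r := sub_pos.2 h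
  have hroot : τ * ((τ - r) / τ) ^ ((1 : ℝ) / 2) =
      ((τ - r) ^ (-(1 / 2) : ℝ) * τ ^ (-(1 / 2) : ℝ))⁻¹ := by
    rw [Real.div_rpow hd.le hτ.le, Real.rpow_neg hd.le, Real.rpow_neg hτ.le, mul_inv, inv_inv,
      inv_inv, ← mul_div_assoc, mul_comm, mul_div_assoc]
    congr 1
    rw [div_eq_iff (by positivity), ← Real.rpow_add hτ]
    norm_num
  have hsplit : r = r ^ (p / 2) * r ^ (1 - p / 2) := by
    rw [← Real.rpow_add hr, add_sub_cancel, Real.rpow_one]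
  calc r * (K ^ p / (τ * (1 - (r / τ) ^ 2) ^ ((1 : ℝ) / 2)))
      ≤ r * (K ^ p / (τ * ((τ - r) / τ) ^ ((1 : ℝ) / 2))) := by
        gcongr
        exact div_le_one_sub_div_sq hr.le h.le hτ
    _ = (τ - r) ^ (-(1 / 2) : ℝ) *
          (r ^ (p / 2) * K ^ p * (r ^ (1 - p / 2) * τ ^ (-(1 / 2) : ℝ))) := by
        rw [hroot, div_inv_eq_mul]
        nth_rewrite 1 [hsplit]
        ring
    _ ≤ (τ - r) ^ (-(1 / 2) : ℝ) *
          (r ^ (p / 2) * K ^ p * (τ ^ (1 - p / 2) * τ ^ (-(1 / 2) : ℝ))) := by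
        gcongr
        linarith
    _ = (τ - r) ^ (-(1 / 2) : ℝ) * ((r * K ^ 2) ^ (p / 2) * τ ^ ((1 - p) / 2)) := by
        rw [mul_sq_rpow_half hr.le hK, ← Real.rpow_add hτ]
        ring_nf

end LightConeWeight

section TipCoordinates

variable {t ε : ℝ}

/-- The pairs `(s, a)` such that, at time `s ∈ (0, t)`, the backward light cone with tip time `a`
meets the interior of the near-boundary shell `(1 - ε)(t - s) < |y - x| ≤ t - s`. Parametrizing
the radius as `|y - x| = a - s` turns the shell integral into an integral over backward cones. -/
def tipRegion (t ε : ℝ) : Set (ℝ × ℝ) :=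
  {q | 0 < q.1 ∧ q.1 < q.2 ∧ q.2 < t ∧ t - q.2 < ε * (t - q.1)}

theorem measurableSet_tipRegion (t ε : ℝ) : MeasurableSet (tipRegion t ε) := by
  unfold tipRegion
  measurability

theorem tip_mem_Ioo_of_mem_tipRegion (hε : 0 < ε) {s a : ℝ} (h : (s, a) ∈ tipRegion t ε) :
    a ∈ Ioo ((1 - ε) * t) t := by
  obtain ⟨hs, -, hat, hshell⟩ := h
  dsimp only at hs hat hshell
  exact ⟨by nlinarith, hat⟩

theorem tipRegion_section_subset_Ioc (t ε a : ℝ) : {s | (s, a) ∈ tipRegion t ε} ⊆ Ioc 0 a :=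
  fun _ h => ⟨h.1, h.2.1.le⟩

theorem tipRegion_section_subset_preimage_Ioi (hε : 0 < ε) (a : ℝ) :
    {s | (s, a) ∈ tipRegion t ε} ⊆ (fun s => t - s) ⁻¹' Ioi ((t - a) / ε) :=
  fun _ h => (div_lt_iff₀' hε).2 h.2.2.2

theorem setLIntegral_shell_eq_setLIntegral_tip {F : EuclideanSpace ℝ (Fin 2) → ℝ≥0∞}
    (hF : Measurable F) (x : EuclideanSpace ℝ (Fin 2)) {s : ℝ} (hs : 0 < s) :
    ∫⁻ y in {y | (1 - ε) * (t - s) < dist y x ∧ dist y x ≤ t - s}, F y =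
      ∫⁻ a in {a | (s, a) ∈ tipRegion t ε}, ∫⁻ θ in Ioc (0 : ℝ) (2 * Real.pi),
        ENNReal.ofReal (a - s) * F (x + (a - s) • unitVec θ) := by
  have hpreimage : {a | (s, a) ∈ tipRegion t ε} =
      (fun a => a - s) ⁻¹' Ioo (0 ⊔ (1 - ε) * (t - s)) (t - s) := by
    ext a
    simp only [tipRegion, mem_ofPred_eq, mem_preimage, mem_Ioo, sup_lt_iff, sub_lt_sub_iff_right,
      sub_pos, hs, true_and, and_assoc]
    refine and_congr_right fun _ => ⟨fun h => ⟨?_, h.1⟩, fun h => ⟨h.2, ?_⟩⟩ <;> linarith [h.1, h.2]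
  rw [hpreimage, (measurePreserving_sub_right volume s).setLIntegral_comp_preimage_emb
      (MeasurableEquiv.subRight s).measurableEmbedding
      (fun r => ∫⁻ θ in Ioc (0 : ℝ) (2 * Real.pi), ENNReal.ofReal r * F (x + r • unitVec θ)),
    restrict_Ioo_eq_restrict_Ioc, max_comm, ← Ioc_inter_Ioi, inter_comm]
  exact setLIntegral_dist_mem_eq_lintegral_polar hF x measurableSet_Ioc

end TipCoordinates

section Slice

variable {Kg : ℝ → EuclideanSpace ℝ (Fin 2) → ℝ} {p t ε a : ℝ}

/-- The integrand `K_g ^ p / ((t - s) (1 - |ξ|²) ^ (1/2))` of the shell integral, with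
`ξ = (y - x) / (t - s)`. Only `|ξ| ≤ 1` is meaningful: elsewhere, and on `|ξ| = 1`, junk values of
`rpow` and of division enter. -/
noncomputable def shellDensity (p : ℝ) (Kg : ℝ → EuclideanSpace ℝ (Fin 2) → ℝ) (t : ℝ)
    (x : EuclideanSpace ℝ (Fin 2)) (s : ℝ) (y : EuclideanSpace ℝ (Fin 2)) : ℝ≥0∞ :=
  ENNReal.ofReal (Kg s y ^ p / ((t - s) * (1 - (dist y x / (t - s)) ^ 2) ^ ((1 : ℝ) / 2)))

theorem measurable_shellDensity (p : ℝ) (hK : Measurable (Function.uncurry Kg)) (t : ℝ)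
    (x : EuclideanSpace ℝ (Fin 2)) : Measurable (Function.uncurry (shellDensity p Kg t x)) := by
  have hK' : Measurable fun z : ℝ × EuclideanSpace ℝ (Fin 2) => Kg z.1 z.2 := hK
  unfold shellDensity Function.uncurry
  fun_prop

/-- The integral of `shellDensity` at time `s` over the circle of radius `a - s` about `x`, which is
the section of the backward light cone with tip `(a, x)`; the factor `a - s` is the arc length. -/
noncomputable def circleDensity (p : ℝ) (Kg : ℝ → EuclideanSpace ℝ (Fin 2) → ℝ) (t : ℝ)
    (x : EuclideanSpace ℝ (Fin 2)) (s a : ℝ) : ℝ≥0∞ :=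
  ∫⁻ θ in Ioc (0 : ℝ) (2 * Real.pi),
    ENNReal.ofReal (a - s) * shellDensity p Kg t x s (x + (a - s) • unitVec θ)

theorem measurable_circleDensity (p : ℝ) (hK : Measurable (Function.uncurry Kg)) (t : ℝ)
    (x : EuclideanSpace ℝ (Fin 2)) : Measurable (Function.uncurry (circleDensity p Kg t x)) := by
  have hpolar : Measurable fun z : (ℝ × ℝ) × ℝ =>
      shellDensity p Kg t x z.1.1 (x + (z.1.2 - z.1.1) • unitVec z.2) :=
    (measurable_shellDensity p hK t x).comp
      (f := fun z : (ℝ × ℝ) × ℝ => (z.1.1, x + (z.1.2 - z.1.1) • unitVec z.2)) (by fun_prop)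
  have hradius : Measurable fun z : (ℝ × ℝ) × ℝ => ENNReal.ofReal (z.1.2 - z.1.1) := by fun_prop
  exact (hradius.mul hpolar).lintegral_prod_right'

/-- The integrand of `coneFlux` as a function of `(s, θ)`, the factor to which the flux bound is
applied in Hölder's inequality. -/
noncomputable def fluxDensity (Kg : ℝ → EuclideanSpace ℝ (Fin 2) → ℝ) (a : ℝ)
    (x : EuclideanSpace ℝ (Fin 2)) (s θ : ℝ) : ℝ≥0∞ :=
  ENNReal.ofReal ((a - s) * Kg s (x + (a - s) • unitVec θ) ^ 2)

theorem measurable_fluxDensity (hK : Measurable (Function.uncurry Kg)) (a : ℝ)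
    (x : EuclideanSpace ℝ (Fin 2)) : Measurable (Function.uncurry (fluxDensity Kg a x)) := by
  have hKcone : Measurable fun z : ℝ × ℝ => Kg z.1 (x + (a - z.1) • unitVec z.2) :=
    hK.comp (g := Function.uncurry Kg)
      (f := fun z : ℝ × ℝ => (z.1, x + (a - z.1) • unitVec z.2)) (by fun_prop)
  have hradius : Measurable fun z : ℝ × ℝ => a - z.1 := by fun_prop
  exact (hradius.mul (hKcone.pow_const 2)).ennreal_ofReal

theorem ofReal_mul_shellDensity_le (hp₀ : 0 ≤ p) (hp₂ : p < 2) (hK₀ : ∀ s y, 0 ≤ Kg s y)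
    (x : EuclideanSpace ℝ (Fin 2)) {s : ℝ} (hsa : s < a) (hat : a < t) (θ : ℝ) :
    ENNReal.ofReal (a - s) * shellDensity p Kg t x s (x + (a - s) • unitVec θ) ≤
      ENNReal.ofReal ((t - a) ^ (-(1 / 2) : ℝ)) * (fluxDensity Kg a x s θ ^ (p / 2) *
        ENNReal.ofReal ((t - s) ^ ((1 - p) / (2 - p))) ^ (1 - p / 2)) := by
  have hr : 0 < a - s := sub_pos.2 hsa
  have hτ : 0 < t - s := sub_pos.2 (hsa.trans hat)
  have hgap : 0 < 2 - p := sub_pos.2 hp₂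
  have hexp : (1 - p) / (2 - p) * (1 - p / 2) = (1 - p) / 2 := by
    field_simp
  have hbound := mul_rpow_div_le hr (sub_lt_sub_right hat s)
    (hK₀ s (x + (a - s) • unitVec θ)) hp₂.le
  rw [sub_sub_sub_cancel_right] at hbound
  simp only [shellDensity, fluxDensity, dist_add_smul_unitVec hr.le]
  rw [ENNReal.ofReal_rpow_of_nonneg (p := p / 2) (by positivity) (by positivity),
    ENNReal.ofReal_rpow_of_nonneg (by positivity) (by linarith), ← Real.rpow_mul hτ.le, hexp,
    ← ENNReal.ofReal_mul hr.le, ← ENNReal.ofReal_mul (by positivity),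
    ← ENNReal.ofReal_mul (Real.rpow_nonneg (sub_pos.2 hat).le _)]
  exact ENNReal.ofReal_le_ofReal hbound

theorem setLIntegral_tipRegion_section_rpow_le (hp : p ∈ Ioo (3 / 2 : ℝ) 2) (hε : 0 < ε)
    (hat : a < t) :
    ∫⁻ s in {s | (s, a) ∈ tipRegion t ε}, ENNReal.ofReal ((t - s) ^ ((1 - p) / (2 - p))) ≤
      ENNReal.ofReal ((2 - p) / (2 * p - 3) *
        ((t - a) / ε) ^ (-((2 * p - 3) / (2 - p)))) := by
  have hp₀ : 0 < 2 - p := sub_pos.2 hp.2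
  have hσ : (1 - p) / (2 - p) < -1 := by
    rw [div_lt_iff₀ hp₀]
    linarith [hp.1]
  have hσ_add_one : (1 - p) / (2 - p) + 1 = -((2 * p - 3) / (2 - p)) := by
    rw [div_add_one hp₀.ne', ← neg_div]
    ring
  calc ∫⁻ s in {s | (s, a) ∈ tipRegion t ε}, ENNReal.ofReal ((t - s) ^ ((1 - p) / (2 - p)))
      ≤ ∫⁻ s in (fun s => t - s) ⁻¹' Ioi ((t - a) / ε),
          ENNReal.ofReal ((t - s) ^ ((1 - p) / (2 - p))) :=
        lintegral_mono_set (tipRegion_section_subset_preimage_Ioi hε a)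
    _ = ∫⁻ u in Ioi ((t - a) / ε), ENNReal.ofReal (u ^ ((1 - p) / (2 - p))) :=
        (volume.measurePreserving_sub_left t).setLIntegral_comp_preimage measurableSet_Ioi
          (f := fun u => ENNReal.ofReal (u ^ ((1 - p) / (2 - p)))) (by fun_prop)
    _ = ENNReal.ofReal ((2 - p) / (2 * p - 3) *
          ((t - a) / ε) ^ (-((2 * p - 3) / (2 - p)))) := by
        rw [lintegral_Ioi_ofReal_rpow hσ (div_pos (sub_pos.2 hat) hε), hσ_add_one,
          neg_div_neg_eq, div_div_eq_mul_div]
        ring_nf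

/-- The constant of the slice estimate: the angular mass `2π` times the tail constant
`(2 - p) / (2p - 3)` of the weight, raised to the Hölder exponent `1 - p / 2`. -/
noncomputable def sliceConst (p : ℝ) : ℝ :=
  (2 * Real.pi * ((2 - p) / (2 * p - 3))) ^ (1 - p / 2)

theorem sliceConst_pos (hp : p ∈ Ioo (3 / 2 : ℝ) 2) : 0 < sliceConst p := by
  have hp₁ : 0 < 2 * p - 3 := by linarith [hp.1]
  have hp₂ : 0 < 2 - p := sub_pos.2 hp.2
  unfold sliceConst
  positivity

theorem rpow_mul_tail_rpow_eq (hp : p ∈ Ioo (3 / 2 : ℝ) 2) {d : ℝ} (hd : 0 < d) (hε : 0 < ε) :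
    d ^ (-(1 / 2) : ℝ) * (2 * Real.pi *
      ((2 - p) / (2 * p - 3) * (d / ε) ^ (-((2 * p - 3) / (2 - p))))) ^ (1 - p / 2) =
      sliceConst p * ε ^ (p - 3 / 2) * d ^ (1 - p) := by
  have hp₁ : 0 < 2 * p - 3 := by linarith [hp.1]
  have hp₂ : 0 < 2 - p := sub_pos.2 hp.2
  have hexp : -((2 * p - 3) / (2 - p)) * (1 - p / 2) = -(p - 3 / 2) := by
    field_simp
  have hpow : d ^ (1 - p) = d ^ (-(1 / 2) : ℝ) * d ^ (-(p - 3 / 2)) := by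
    rw [← Real.rpow_add hd]
    ring_nf
  rw [← mul_assoc (2 * Real.pi), Real.mul_rpow (by positivity) (by positivity),
    ← Real.rpow_mul (by positivity), hexp, Real.div_rpow hd.le hε.le, Real.rpow_neg hε.le,
    div_inv_eq_mul, hpow]
  unfold sliceConst
  ring

theorem setLIntegral_tipRegion_section_le (hp : p ∈ Ioo (3 / 2 : ℝ) 2)
    (hK : Measurable (Function.uncurry Kg)) (hK₀ : ∀ s y, 0 ≤ Kg s y)
    (x : EuclideanSpace ℝ (Fin 2)) (hε : 0 < ε) (hat : a < t) :
    ∫⁻ s in {s | (s, a) ∈ tipRegion t ε}, circleDensity p Kg t x s a ≤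
      coneFlux Kg a x ^ (p / 2) *
        ENNReal.ofReal (sliceConst p * ε ^ (p - 3 / 2) * (t - a) ^ (1 - p)) := by
  have hp₀ : 0 ≤ p / 2 := by linarith [hp.1]
  have hp₁ : 0 < 2 * p - 3 := by linarith [hp.1]
  have hp₂ : 0 < 2 - p := sub_pos.2 hp.2
  have hd : 0 < t - a := sub_pos.2 hat
  set A := {s | (s, a) ∈ tipRegion t ε}
  set w : ℝ → ℝ≥0∞ := fun s => ENNReal.ofReal ((t - s) ^ ((1 - p) / (2 - p)))
  set κ := ENNReal.ofReal ((t - a) ^ (-(1 / 2) : ℝ)) with hκ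
  have hA : MeasurableSet A := measurable_prodMk_right (measurableSet_tipRegion t ε)
  have hflux : ∫⁻ s in A, ∫⁻ θ in Ioc (0 : ℝ) (2 * Real.pi), fluxDensity Kg a x s θ ≤
      coneFlux Kg a x := lintegral_mono_set (tipRegion_section_subset_Ioc t ε a)
  have htail := setLIntegral_tipRegion_section_rpow_le hp hε hat
  have holder := lintegral_lintegral_rpow_mul_rpow_le (μ := volume.restrict A)
    (ν := volume.restrict (Ioc 0 (2 * Real.pi))) (measurable_fluxDensity hK a x)
    (w := w) (by fun_prop) hp₀ (by linarith)
  rw [Measure.restrict_apply_univ, Real.volume_Ioc, sub_zero] at holder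
  calc ∫⁻ s in A, circleDensity p Kg t x s a
      ≤ ∫⁻ s in A, ∫⁻ θ in Ioc (0 : ℝ) (2 * Real.pi),
          κ * (fluxDensity Kg a x s θ ^ (p / 2) * w s ^ (1 - p / 2)) :=
        setLIntegral_mono' hA fun s hs => lintegral_mono fun θ =>
          ofReal_mul_shellDensity_le (by linarith) hp.2 hK₀ x hs.2.1 hat θ
    _ = κ * ∫⁻ s in A, ∫⁻ θ in Ioc (0 : ℝ) (2 * Real.pi),
          fluxDensity Kg a x s θ ^ (p / 2) * w s ^ (1 - p / 2) := by
        simp only [lintegral_const_mul' κ _ ENNReal.ofReal_ne_top]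
    _ ≤ κ * (coneFlux Kg a x ^ (p / 2) * (ENNReal.ofReal (2 * Real.pi) * ENNReal.ofReal
          ((2 - p) / (2 * p - 3) * ((t - a) / ε) ^ (-((2 * p - 3) / (2 - p))))) ^
            (1 - p / 2)) := by
        gcongr
        refine holder.trans ?_
        gcongr
        linarith
    _ = coneFlux Kg a x ^ (p / 2) *
          ENNReal.ofReal (sliceConst p * ε ^ (p - 3 / 2) * (t - a) ^ (1 - p)) := by
        rw [hκ, ← rpow_mul_tail_rpow_eq hp hd hε, mul_left_comm,
          ← ENNReal.ofReal_mul (by positivity),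
          ENNReal.ofReal_rpow_of_nonneg (by positivity) (by linarith),
          ← ENNReal.ofReal_mul (by positivity)]

theorem setLIntegral_Ioo_ofReal_rpow_sub {σ : ℝ} (hσ : -1 < σ) (ht : 0 ≤ t) (hε : 0 ≤ ε) :
    ∫⁻ a in Ioo ((1 - ε) * t) t, ENNReal.ofReal ((t - a) ^ σ) =
      ENNReal.ofReal ((ε * t) ^ (σ + 1) / (σ + 1)) := by
  have hpreimage : Ioo ((1 - ε) * t) t = (fun a => t - a) ⁻¹' Ioo 0 (ε * t) := by
    rw [Set.preimage_const_sub_Ioo, sub_zero, one_sub_mul]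
  rw [hpreimage, (volume.measurePreserving_sub_left t).setLIntegral_comp_preimage
    measurableSet_Ioo (f := fun u => ENNReal.ofReal (u ^ σ)) (by fun_prop),
    lintegral_Ioo_ofReal_rpow hσ (by positivity)]

theorem lintegral_tipRegion_circleDensity_le (hp : p ∈ Ioo (3 / 2 : ℝ) 2)
    (hK : Measurable (Function.uncurry Kg)) (hK₀ : ∀ s y, 0 ≤ Kg s y)
    (x : EuclideanSpace ℝ (Fin 2)) (ht : 0 < t) (hε : 0 < ε) {Cf : ℝ≥0∞}
    (hflux : ∀ a ∈ Ioo ((1 - ε) * t) t, coneFlux Kg a x ≤ Cf) :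
    ∫⁻ a, ∫⁻ s in {s | (s, a) ∈ tipRegion t ε}, circleDensity p Kg t x s a ≤
      Cf ^ (p / 2) * ENNReal.ofReal (sliceConst p * ε ^ (p - 3 / 2)) *
        ENNReal.ofReal ((ε * t) ^ (1 - p + 1) / (1 - p + 1)) := by
  have hC := sliceConst_pos hp
  have hsupport : (fun a => ∫⁻ s in {s | (s, a) ∈ tipRegion t ε},
      circleDensity p Kg t x s a).support ⊆ Ioo ((1 - ε) * t) t := by
    refine Function.support_subset_iff'.2 fun a ha => ?_
    have hempty : {s | (s, a) ∈ tipRegion t ε} = ∅ :=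
      eq_empty_of_forall_notMem fun s hs => ha (tip_mem_Ioo_of_mem_tipRegion hε hs)
    rw [hempty, setLIntegral_empty]
  rw [← setLIntegral_eq_of_support_subset hsupport,
    ← setLIntegral_Ioo_ofReal_rpow_sub (by linarith [hp.2]) ht.le hε.le,
    ← lintegral_const_mul _ (by fun_prop)]
  refine setLIntegral_mono' measurableSet_Ioo fun a ha => ?_
  rw [mul_assoc, ← ENNReal.ofReal_mul (by positivity)]
  refine (setLIntegral_tipRegion_section_le hp hK hK₀ x hε ha.2).trans ?_
  gcongr
  · linarith [hp.1]
  · exact hflux a ha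

theorem sliceConst_mul_tip_integral_eq (p : ℝ) (ht : 0 ≤ t) (hε : 0 < ε) :
    sliceConst p * ε ^ (p - 3 / 2) * ((ε * t) ^ (1 - p + 1) / (1 - p + 1)) =
      sliceConst p / (2 - p) * t ^ (2 - p) * ε ^ ((1 : ℝ) / 2) := by
  have hpow : ε ^ ((1 : ℝ) / 2) = ε ^ (p - 3 / 2) * ε ^ (2 - p) := by
    rw [← Real.rpow_add hε]
    ring_nf
  rw [show 1 - p + 1 = 2 - p by ring, Real.mul_rpow hε.le ht, hpow]
  ring

end Slice

theorem near_boundary_flux_estimate_general {p : ℝ} (hp : p ∈ Ioo (3 / 2 : ℝ) 2)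
    {t : ℝ} (ht : 0 < t) {ε : ℝ} (hε : 0 < ε) (x : EuclideanSpace ℝ (Fin 2))
    {Kg : ℝ → EuclideanSpace ℝ (Fin 2) → ℝ} (hK : Measurable (Function.uncurry Kg))
    (hK₀ : ∀ s y, 0 ≤ Kg s y) {Cf : ℝ≥0∞}
    (hflux : ∀ a ∈ Ioo ((1 - ε) * t) t, coneFlux Kg a x ≤ Cf) :
    ∫⁻ s in Ioc (0 : ℝ) t, ∫⁻ y in {y | (1 - ε) * (t - s) < dist y x ∧ dist y x ≤ t - s},
        ENNReal.ofReal (Kg s y ^ p /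
          ((t - s) * (1 - (dist y x / (t - s)) ^ 2) ^ ((1 : ℝ) / 2))) ≤
      ENNReal.ofReal (sliceConst p / (2 - p)) * Cf ^ (p / 2) * ENNReal.ofReal t ^ (2 - p) *
        ENNReal.ofReal ε ^ ((1 : ℝ) / 2) := by
  have hp₀ : 0 < 2 - p := sub_pos.2 hp.2
  have hC := sliceConst_pos hp
  have hshell (s : ℝ) : Measurable (shellDensity p Kg t x s) :=
    (measurable_shellDensity p hK t x).comp measurable_prodMk_left
  calc ∫⁻ s in Ioc (0 : ℝ) t, ∫⁻ y in {y | (1 - ε) * (t - s) < dist y x ∧ dist y x ≤ t - s},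
        shellDensity p Kg t x s y
      = ∫⁻ s in Ioc (0 : ℝ) t, ∫⁻ a in {a | (s, a) ∈ tipRegion t ε}, circleDensity p Kg t x s a :=
        setLIntegral_congr_fun measurableSet_Ioc fun s hs =>
          setLIntegral_shell_eq_setLIntegral_tip (hshell s) x hs.1
    _ ≤ ∫⁻ s, ∫⁻ a in {a | (s, a) ∈ tipRegion t ε}, circleDensity p Kg t x s a :=
        setLIntegral_le_lintegral _ _
    _ = ∫⁻ a, ∫⁻ s in {s | (s, a) ∈ tipRegion t ε}, circleDensity p Kg t x s a :=
        lintegral_setLIntegral_section_swap (measurableSet_tipRegion t ε)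
          (measurable_circleDensity p hK t x)
    _ ≤ Cf ^ (p / 2) * ENNReal.ofReal (sliceConst p * ε ^ (p - 3 / 2)) *
          ENNReal.ofReal ((ε * t) ^ (1 - p + 1) / (1 - p + 1)) :=
        lintegral_tipRegion_circleDensity_le hp hK hK₀ x ht hε hflux
    _ = ENNReal.ofReal (sliceConst p / (2 - p)) * Cf ^ (p / 2) * ENNReal.ofReal t ^ (2 - p) *
          ENNReal.ofReal ε ^ ((1 : ℝ) / 2) := by
        rw [mul_assoc, ← ENNReal.ofReal_mul (by positivity),
          sliceConst_mul_tip_integral_eq p ht.le hε, ENNReal.ofReal_mul (by positivity),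
          ENNReal.ofReal_mul (by positivity), ENNReal.ofReal_rpow_of_pos ht,
          ENNReal.ofReal_rpow_of_pos hε]
        ring

/-- **Near-boundary flux estimate** (the bound for the integral (5.14) in the proof of
Proposition 5.4).  There are absolute constants `C > 0` and `k ≥ 0` such that if the
flux of `K_g` on every backward cone with tip `(a,x)`, `a ∈ [0,t]`, is at most `C_f`,
then for every `ε ∈ (0,1]`, with `ξ = (y−x)/(t−s)`,
`∫₀ᵗ∫_{(1−ε)(t−s)<|y−x|≤t−s} K_g^{5/3}/((t−s)(1−|ξ|²)^{1/2}) dy ds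
  ≤ C C_f^{5/6} (1+t)^k ε^{1/2}`. -/
theorem near_boundary_flux_estimate :
    ∃ C : ℝ≥0, 0 < C ∧ ∃ k : ℝ, 0 ≤ k ∧
      ∀ (t : ℝ), 0 < t → ∀ (x : EuclideanSpace ℝ (Fin 2)) (Cf : ℝ), 0 < Cf →
      ∀ (Kg : ℝ → EuclideanSpace ℝ (Fin 2) → ℝ),
        Measurable (Function.uncurry Kg) → (∀ s y, 0 ≤ Kg s y) →
        (∀ a, 0 ≤ a → a ≤ t → coneFlux Kg a x ≤ ENNReal.ofReal Cf) →
        ∀ ε : ℝ, 0 < ε → ε ≤ 1 →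
          (∫⁻ s in Ioc (0 : ℝ) t,
              ∫⁻ y in {y | (1 - ε) * (t - s) < dist y x ∧ dist y x ≤ t - s},
              ENNReal.ofReal (Kg s y ^ ((5 : ℝ) / 3) /
                ((t - s) * (1 - (dist y x / (t - s)) ^ 2) ^ ((1 : ℝ) / 2))))
            ≤ C * ENNReal.ofReal Cf ^ ((5 : ℝ) / 6) * ENNReal.ofReal (1 + t) ^ k
              * ENNReal.ofReal ε ^ ((1 : ℝ) / 2) := by
  have hp : (5 / 3 : ℝ) ∈ Ioo (3 / 2 : ℝ) 2 := by norm_num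
  have hC : 0 < sliceConst (5 / 3) / (2 - 5 / 3) := div_pos (sliceConst_pos hp) (by norm_num)
  refine ⟨(sliceConst (5 / 3) / (2 - 5 / 3)).toNNReal, Real.toNNReal_pos.2 hC, 2 - 5 / 3,
    by norm_num, fun t ht x Cf _ Kg hK hK₀ hflux ε hε hε₁ => ?_⟩
  have hlocal : ∀ a ∈ Ioo ((1 - ε) * t) t, coneFlux Kg a x ≤ ENNReal.ofReal Cf := fun a ha =>
    hflux a ((mul_nonneg (sub_nonneg.2 hε₁) ht.le).trans ha.1.le) ha.2.le
  refine (near_boundary_flux_estimate_general hp ht hε x hK hK₀ hlocal).trans ?_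
  rw [show (5 / 3 / 2 : ℝ) = 5 / 6 by norm_num]
  gcongr
  · norm_num
  · linarith
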